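/- arXiv:0804.3032 — 2 statements merged into one kernel-verified Lean document; each statement's English description precedes it below -/
import Mathlib

section
/- Let β > 0. There exists a constant C > 0 depending only on β such that for all integers n ≥ 3, |Σ_{1≤a<b<c≤n} a^{−2/(2+β)}·b^{−1}·c^{−(2+2β)/(2+β)} − ((2+β)/β)²·log n| ≤ C. -/
theorem tsl_mvt (p : ℝ) (hp0 : p ≠ 0) (hp : p < 1) (x : ℝ) (hx : 0 < x) :
    (x+1)^(p-1) ≤ ((x+1)^p - x^p)/p ∧ ((x+1)^p - x^p)/p ≤ x^(p-1) := by
  obtain ⟨c, ⟨h1, h2⟩, hc⟩ := exists_hasDerivAt_eq_slope (fun y : ℝ => y^p)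
    (fun y => p * y^(p-1)) (show x < x+1 by linarith)
    (by
      intro y hy
      exact (Real.continuousAt_rpow_const y p
        (Or.inl (by linarith [hy.1] : 0 < y).ne')).continuousWithinAt)
    (by
      intro y hy
      exact Real.hasDerivAt_rpow_const (Or.inl (by linarith [hy.1] : 0 < y).ne'))
  have e : ((x+1)^p - x^p)/p = c^(p-1) := by
    have : x + 1 - x = 1 := by ring
    rw [this, div_one] at hc
    rw [← hc]; field_simp
  rw [e]
  exact ⟨Real.rpow_le_rpow_of_nonpos (by linarith) h2.le (by linarith),
    Real.rpow_le_rpow_of_nonpos hx h1.le (by linarith)⟩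

theorem tsl_A_low (s : ℝ) (hs : 0 < s) (hs1 : s < 1) (b : ℕ) (hb : 1 ≤ b) :
    ((b:ℝ)^s - 1)/s ≤ ∑ a ∈ Finset.Ico 1 b, (a:ℝ)^(s-1) := by
  induction b, hb using Nat.le_induction with
  | base => simp
  | succ b hb ih =>
    rw [Finset.sum_Ico_succ_top hb]
    have h := (tsl_mvt s hs.ne' hs1 b (by positivity)).2
    push_cast
    have : (((b:ℝ)+1)^s - 1)/s = ((b:ℝ)^s - 1)/s + (((b:ℝ)+1)^s - (b:ℝ)^s)/s := by ring
    linarith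

theorem tsl_A_up (s : ℝ) (hs : 0 < s) (hs1 : s < 1) (b : ℕ) (hb : 1 ≤ b) :
    ∑ a ∈ Finset.Icc 1 b, (a:ℝ)^(s-1) ≤ (b:ℝ)^s/s := by
  induction b, hb using Nat.le_induction with
  | base =>
    simp
    exact (one_le_inv₀ hs).2 hs1.le
  | succ b hb ih =>
    rw [Finset.sum_Icc_succ_top (by omega)]
    have h := (tsl_mvt s hs.ne' hs1 b (by positivity)).1
    push_cast
    have : (((b:ℝ)+1)^s)/s = ((b:ℝ)^s)/s + (((b:ℝ)+1)^s - (b:ℝ)^s)/s := by ring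
    linarith

theorem tsl_D (s : ℝ) (hs : 0 < s) (b : ℕ) (hb : 1 ≤ b) (n : ℕ) (hn : b ≤ n) :
    (((b:ℝ)+1)^(-s) - ((n:ℝ)+1)^(-s))/s ≤ ∑ c ∈ Finset.Ioc b n, (c:ℝ)^(-s-1) ∧
    ∑ c ∈ Finset.Ioc b n, (c:ℝ)^(-s-1) ≤ ((b:ℝ)^(-s) - (n:ℝ)^(-s))/s := by
  induction n, hn using Nat.le_induction with
  | base => simp
  | succ n hn ih =>
    rw [Finset.sum_Ioc_succ_top hn]
    have hn0 : (0:ℝ) < n := by exact_mod_cast (by omega : 0 < n)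
    have h := (tsl_mvt (-s) (by linarith) (by linarith) n hn0).1
    have h' := (tsl_mvt (-s) (by linarith) (by linarith) (n+1) (by positivity)).2
    push_cast
    rw [div_neg, ← neg_div, neg_sub] at h h'
    simp only [sub_div] at *
    constructor <;> linarith [ih.1, ih.2]

theorem tsl_main (s : ℝ) (hs : 0 < s) (hs1 : s < 1) (n : ℕ) (hn : 1 ≤ n) :
    |(∑ b ∈ Finset.Icc 1 n, (b:ℝ)⁻¹ * (∑ a ∈ Finset.Ico 1 b, (a:ℝ)^(s-1)) *
      (∑ c ∈ Finset.Ioc b n, (c:ℝ)^(-s-1))) - (1/s)^2 * Real.log n|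
      ≤ (1/s)^2 * ((1+s)*(1+1/s) + 1/s) := by
  have hn0 : (0:ℝ) < n := by exact_mod_cast (by omega : 0 < n)
  have hH : ((harmonic n : ℚ) : ℝ) = ∑ b ∈ Finset.Icc 1 n, (b:ℝ)⁻¹ := by
    rw [harmonic_eq_sum_Icc]; push_cast; rfl
  have hH1 := harmonic_le_one_add_log n
  have hH2 := log_add_one_le_harmonic n
  rw [hH] at hH1 hH2
  have hlog : Real.log n ≤ Real.log (↑(n+1)) :=
    Real.log_le_log hn0 (by push_cast; linarith)
  have hsq : (0:ℝ) < (1/s)^2 := by positivity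
  have hZ : ∑ b ∈ Finset.Icc 1 n, (b:ℝ)^(-s-1) ≤ 1 + 1/s := by
    rw [← Finset.add_sum_Ioc_eq_sum_Icc hn]
    have := (tsl_D s hs 1 le_rfl n hn).2
    have h3 : ((1:ℕ):ℝ)^(-s) = 1 := by simp
    have h4 : ((1:ℕ):ℝ)^(-s-1) = 1 := by simp
    have h5 : 0 ≤ (n:ℝ)^(-s)/s := by positivity
    rw [h3, sub_div] at this
    rw [h4]; linarith
  have hP := tsl_A_up s hs hs1 n hn
  have hterm : ∀ b ∈ Finset.Icc 1 n,
      (1/s)^2 * ((b:ℝ)⁻¹ - (1+s) * (b:ℝ)^(-s-1) - (n:ℝ)^(-s) * (b:ℝ)^(s-1)) ≤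
      (b:ℝ)⁻¹ * (∑ a ∈ Finset.Ico 1 b, (a:ℝ)^(s-1)) * (∑ c ∈ Finset.Ioc b n, (c:ℝ)^(-s-1)) ∧
      (b:ℝ)⁻¹ * (∑ a ∈ Finset.Ico 1 b, (a:ℝ)^(s-1)) * (∑ c ∈ Finset.Ioc b n, (c:ℝ)^(-s-1))
      ≤ (1/s)^2 * (b:ℝ)⁻¹ := by
    intro b hb
    obtain ⟨hb1, hbn⟩ := Finset.mem_Icc.1 hb
    have hb0 : (0:ℝ) < b := by exact_mod_cast (by omega : 0 < b)
    have hb1' : (1:ℝ) ≤ b := by exact_mod_cast hb1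
    have hAl := tsl_A_low s hs hs1 b hb1
    have hAu : ∑ a ∈ Finset.Ico 1 b, (a:ℝ)^(s-1) ≤ (b:ℝ)^s/s :=
      (Finset.sum_le_sum_of_subset_of_nonneg Finset.Ico_subset_Icc_self
        (fun _ _ _ => by positivity)).trans (tsl_A_up s hs hs1 b hb1)
    obtain ⟨hDl, hDu⟩ := tsl_D s hs b hb1 n hbn
    have hD0 : 0 ≤ ∑ c ∈ Finset.Ioc b n, (c:ℝ)^(-s-1) :=
      Finset.sum_nonneg (fun _ _ => by positivity)
    set A := ∑ a ∈ Finset.Ico 1 b, (a:ℝ)^(s-1)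
    set D := ∑ c ∈ Finset.Ioc b n, (c:ℝ)^(-s-1)
    have hm := (tsl_mvt (-s) (by linarith) (by linarith) b hb0).2
    rw [div_neg, ← neg_div, neg_sub] at hm
    have hnn : ((n:ℝ)+1)^(-s) ≤ (n:ℝ)^(-s) :=
      Real.rpow_le_rpow_of_nonpos hn0 (by linarith) (by linarith)
    have hnpos : 0 < (n:ℝ)^(-s) := by positivity
    have hDu' : D ≤ (b:ℝ)^(-s)/s := by
      refine hDu.trans ?_
      gcongr; linarith
    have hDl' : ((b:ℝ)^(-s) - (n:ℝ)^(-s))/s - (b:ℝ)^(-s-1) ≤ D := by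
      have : ((n:ℝ)+1)^(-s)/s ≤ (n:ℝ)^(-s)/s := by gcongr
      simp only [sub_div] at *
      linarith
    have e1 : (b:ℝ)^s * (b:ℝ)^(-s) = 1 := by
      rw [← Real.rpow_add hb0]; simp
    have e2 : (b:ℝ)^(-s-1) = (b:ℝ)^(-s) * (b:ℝ)⁻¹ := by
      rw [Real.rpow_sub hb0, Real.rpow_one]; rfl
    have e3 : (b:ℝ)^(s-1) = (b:ℝ)^s * (b:ℝ)⁻¹ := by
      rw [Real.rpow_sub hb0, Real.rpow_one]; rfl
    have hi : (b:ℝ)⁻¹ ≤ (b:ℝ)^(-s) := by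
      rw [← Real.rpow_neg_one]
      exact Real.rpow_le_rpow_of_exponent_le hb1' (by linarith)
    rw [e2] at hDl' ⊢
    rw [e3]
    have hx : 0 < (b:ℝ)^s := by positivity
    have hy : 0 < (b:ℝ)^(-s) := by positivity
    have hz : 0 < (b:ℝ)⁻¹ := by positivity
    generalize (b:ℝ)^s = x at *
    generalize (b:ℝ)^(-s) = y at *
    generalize (b:ℝ)⁻¹ = z at *
    generalize (n:ℝ)^(-s) = w at *
    constructor
    · have k1 : z * ((x-1)/s) * D ≤ z * A * D := by gcongr
      have k2 : z * x / s * ((y-w)/s - y*z) ≤ z * x / s * D := by gcongr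
      have k3 : z / s * D ≤ z / s * (y / s) := by gcongr
      have k4 : (1/s)^2 * s * (z * z) ≤ (1/s)^2 * s * (z*y) := by gcongr
      have k5 : z * x / s * ((y-w)/s - y*z)
          = (1/s)^2 * (z - w * (x*z)) - (1/s)^2 * s * (z*z) := by
        have : z * x / s * ((y-w)/s - y*z)
          = (1/s)^2 * (z * (x*y) - w*(x*z)) - (1/s)*(z*z)*(x*y) := by ring
        rw [this, e1]; field_simp
      have k6 : z * ((x-1)/s) * D = z * x / s * D - z / s * D := by ring
      have k7 : z / s * (y / s) = (1/s)^2 * (z*y) := by ring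
      have k8 : (1/s)^2 * (z - (1+s)*(y*z) - w*(x*z)) =
        (1/s)^2 * (z - w*(x*z)) - (1/s)^2*(z*y) - (1/s)^2*s*(z*y) := by ring
      linarith
    · calc z * A * D ≤ z * (x/s) * (y/s) := by gcongr
        _ = (1/s)^2 * z * (x*y) := by ring
        _ = _ := by rw [e1, mul_one]
  have hU := Finset.sum_le_sum (fun b hb => (hterm b hb).2)
  have hL := Finset.sum_le_sum (fun b hb => (hterm b hb).1)
  rw [← Finset.mul_sum] at hU hL
  rw [Finset.sum_sub_distrib, Finset.sum_sub_distrib, ← Finset.mul_sum, ← Finset.mul_sum] at hL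
  have hW : (n:ℝ)^(-s) * ∑ b ∈ Finset.Icc 1 n, (b:ℝ)^(s-1) ≤ 1/s := by
    calc _ ≤ (n:ℝ)^(-s) * ((n:ℝ)^s/s) := by gcongr
      _ = ((n:ℝ)^(-s) * (n:ℝ)^s)/s := by ring
      _ = 1/s := by rw [← Real.rpow_add hn0]; simp
  have hZ' := mul_le_mul_of_nonneg_left hZ (by linarith : (0:ℝ) ≤ 1+s)
  have hs' : 0 < 1/s := by positivity
  rw [abs_le]
  constructor
  · have := mul_le_mul_of_nonneg_left
      (show Real.log n - ((1+s)*(1+1/s) + 1/s) ≤ _ by linarith) hsq.le |>.trans hL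
    linarith
  · have h1 := mul_le_mul_of_nonneg_left
      (show (∑ b ∈ Finset.Icc 1 n, (b:ℝ)⁻¹) ≤ Real.log n + ((1+s)*(1+1/s) + 1/s) by
        have : (0:ℝ) < s * (1+1/s) := by positivity
        linarith) hsq.le
    linarith

/-- The triple-sum estimate behind Proposition 4.1: for `β > 0` there is `C > 0` depending
only on `β` such that for all `n ≥ 3`,
`|Σ_{1≤a<b<c≤n} a^{−2/(2+β)} b^{−1} c^{−(2+2β)/(2+β)} − ((2+β)/β)² log n| ≤ C`. -/
theorem triple_sum_log_estimate (β : ℝ) (hβ : 0 < β) :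
    ∃ C : ℝ, 0 < C ∧ ∀ n : ℕ, 3 ≤ n →
      |(∑ a ∈ Finset.Icc 1 n, ∑ b ∈ Finset.Ioc a n, ∑ c ∈ Finset.Ioc b n,
          (a : ℝ) ^ (-(2 / (2 + β))) * (b : ℝ)⁻¹ * (c : ℝ) ^ (-((2 + 2 * β) / (2 + β))))
        - ((2 + β) / β) ^ 2 * Real.log n| ≤ C := by
  obtain ⟨s, hsd⟩ : ∃ s, s = β / (2+β) := ⟨_, rfl⟩
  have hs : 0 < s := by rw [hsd]; positivity
  have hs1 : s < 1 := by rw [hsd, div_lt_one (by positivity)]; linarith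
  refine ⟨(1/s)^2 * ((1+s)*(1+1/s) + 1/s), by positivity, fun n hn => ?_⟩
  have e1 : -(2 / (2+β)) = s - 1 := by rw [hsd]; field_simp; ring
  have e2 : -((2 + 2*β) / (2+β)) = -s - 1 := by rw [hsd]; field_simp; ring
  have e3 : (2+β)/β = 1/s := by rw [hsd]; field_simp
  rw [e1, e2, e3]
  have h := tsl_main s hs hs1 n (by omega)
  convert h using 3
  rw [Finset.sum_comm' (t' := Finset.Icc 1 n) (s' := fun b => Finset.Ico 1 b)
    (by intro a b; simp only [Finset.mem_Icc, Finset.mem_Ioc, Finset.mem_Ico]; omega)]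
  refine Finset.sum_congr rfl fun b _ => ?_
  rw [mul_assoc, Finset.sum_mul_sum, Finset.mul_sum]
  simp only [Finset.mul_sum]
  refine Finset.sum_congr rfl fun a _ => Finset.sum_congr rfl fun c _ => ?_
  ring
end

section
/- Let β > 0. There exists a constant C > 0 depending only on β such that for all integers n ≥ 1, |Σ_{1≤a<b<c≤n} a^{−2/(2+β)}·b^{−(1+β)/(2+β)}·c^{−(1+β)/(2+β)} − ((2+β)²/(β(1+β)))·n| ≤ C·n^{2/(2+β)}. -/
theorem aux_up (u : ℝ) (hu : 0 < u) (hu1 : u ≤ 1) (k : ℝ) (hk : 1 ≤ k) :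
    (k + 1) ^ u ≤ k ^ u + u * k ^ (u - 1) := by
  have hk0 : 0 < k := by linarith
  have h := rpow_one_add_le_one_add_mul_self (s := 1 / k)
    (by have : 0 < 1 / k := by positivity
        linarith) hu.le hu1
  have e : k + 1 = k * (1 + 1 / k) := by field_simp
  rw [e, Real.mul_rpow hk0.le (by positivity), Real.rpow_sub_one hk0.ne']
  calc k ^ u * (1 + 1 / k) ^ u ≤ k ^ u * (1 + u * (1 / k)) := by gcongr
    _ = _ := by field_simp

theorem aux_down (u : ℝ) (hu : 0 < u) (hu1 : u ≤ 1) (k : ℝ) (hk : 0 ≤ k) :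
    k ^ u + u * (k + 1) ^ (u - 1) ≤ (k + 1) ^ u := by
  have hk0 : 0 < k + 1 := by linarith
  have h1 : 1 / (k + 1) ≤ 1 := by
    rw [div_le_one hk0]; linarith
  have h := rpow_one_add_le_one_add_mul_self (s := -(1 / (k + 1)))
    (by linarith) hu.le hu1
  have e : k = (k + 1) * (1 + -(1 / (k + 1))) := by field_simp; ring
  have h2 : k ^ u = (k + 1) ^ u * (1 + -(1 / (k + 1))) ^ u := by
    rw [← Real.mul_rpow hk0.le (by linarith), ← e]
  rw [h2, Real.rpow_sub_one hk0.ne']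
  calc (k + 1) ^ u * (1 + -(1 / (k + 1))) ^ u + u * ((k + 1) ^ u / (k + 1))
      ≤ (k + 1) ^ u * (1 + u * -(1 / (k + 1))) + u * ((k + 1) ^ u / (k + 1)) := by gcongr
    _ = _ := by field_simp; ring

theorem aux_Icc (u : ℝ) (hu : 0 < u) (hu1 : u ≤ 1) (n : ℕ) :
    ∑ k ∈ Finset.Icc 1 n, (k : ℝ) ^ (u - 1) ≤ (n : ℝ) ^ u / u := by
  induction n with
  | zero => simp [Real.zero_rpow hu.ne']
  | succ n ih =>
    rw [Finset.sum_Icc_succ_top (by omega)]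
    have h := aux_down u hu hu1 n (by positivity)
    rw [le_div_iff₀ hu] at ih ⊢
    push_cast
    nlinarith

theorem aux_Ico_low (u : ℝ) (hu : 0 < u) (hu1 : u ≤ 1) (m : ℕ) (hm : 1 ≤ m) :
    (m : ℝ) ^ u / u - 1 / u ≤ ∑ k ∈ Finset.Ico 1 m, (k : ℝ) ^ (u - 1) := by
  rw [← sub_div]
  induction m, hm using Nat.le_induction with
  | base => simp
  | succ m hm ih =>
    rw [Finset.sum_Ico_succ_top hm]
    have h := aux_up u hu hu1 m (by exact_mod_cast hm)
    rw [div_le_iff₀ hu] at ih ⊢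
    push_cast
    nlinarith

theorem aux_Ico_up (u : ℝ) (hu : 0 < u) (hu1 : u ≤ 1) (m : ℕ) :
    ∑ k ∈ Finset.Ico 1 m, (k : ℝ) ^ (u - 1) ≤ (m : ℝ) ^ u / u := by
  refine le_trans (Finset.sum_le_sum_of_subset_of_nonneg ?_ ?_) (aux_Icc u hu hu1 m)
  · exact Finset.Ico_subset_Icc_self
  · intros; positivity

theorem aux_abs (u : ℝ) (hu : 0 < u) (hu1 : u ≤ 1) (m : ℕ) (hm : 1 ≤ m) :
    |∑ k ∈ Finset.Ico 1 m, (k : ℝ) ^ (u - 1) - (m : ℝ) ^ u / u| ≤ 1 / u := by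
  have h1 := aux_Ico_low u hu hu1 m hm
  have h2 := aux_Ico_up u hu hu1 m
  have : 0 < 1 / u := by positivity
  rw [abs_le]; constructor <;> linarith

theorem aux_swap (f : ℕ → ℕ → ℕ → ℝ) (n : ℕ) :
    ∑ a ∈ Finset.Icc 1 n, ∑ b ∈ Finset.Ioc a n, ∑ c ∈ Finset.Ioc b n, f a b c =
    ∑ c ∈ Finset.Icc 1 n, ∑ b ∈ Finset.Ico 1 c, ∑ a ∈ Finset.Ico 1 b, f a b c := by
  rw [Finset.sum_comm' (t' := Finset.Icc 1 n) (s' := fun b => Finset.Ico 1 b)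
    (by intro x y; simp only [Finset.mem_Icc, Finset.mem_Ioc, Finset.mem_Ico]; omega)]
  rw [Finset.sum_congr rfl (fun b _ => Finset.sum_comm)]
  rw [Finset.sum_comm' (t' := Finset.Icc 1 n) (s' := fun b => Finset.Ico 1 b)
    (by intro x y; simp only [Finset.mem_Icc, Finset.mem_Ioc, Finset.mem_Ico]; omega)]


theorem aux_B (x y z : ℝ) (hx : 0 < x) (hx1 : x ≤ 1) (hy : 0 < y) (hy1 : y ≤ 1)
    (hz : 0 < z) (hz1 : z ≤ 1) (h : x + y = z) (c : ℕ) (hc : 1 ≤ c) :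
    |∑ b ∈ Finset.Ico 1 c, (b : ℝ) ^ (y - 1) * ∑ a ∈ Finset.Ico 1 b, (a : ℝ) ^ (x - 1)
      - 1 / (x * z) * (c : ℝ) ^ z| ≤ (1 / (x * y) + 1 / (x * z)) * (c : ℝ) ^ y := by
  have hc1 : (1 : ℝ) ≤ (c : ℝ) ^ y := Real.one_le_rpow (by exact_mod_cast hc) hy.le
  have e : ∑ b ∈ Finset.Ico 1 c, (b : ℝ) ^ (y - 1) * ∑ a ∈ Finset.Ico 1 b, (a : ℝ) ^ (x - 1)
      - 1 / (x * z) * (c : ℝ) ^ z =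
      ∑ b ∈ Finset.Ico 1 c, (b : ℝ) ^ (y - 1) *
        (∑ a ∈ Finset.Ico 1 b, (a : ℝ) ^ (x - 1) - (b : ℝ) ^ x / x)
      + 1 / x * (∑ b ∈ Finset.Ico 1 c, (b : ℝ) ^ (z - 1) - (c : ℝ) ^ z / z) := by
    have : ∀ b ∈ Finset.Ico 1 c, (b : ℝ) ^ (y - 1) *
        (∑ a ∈ Finset.Ico 1 b, (a : ℝ) ^ (x - 1) - (b : ℝ) ^ x / x) =
        (b : ℝ) ^ (y - 1) * ∑ a ∈ Finset.Ico 1 b, (a : ℝ) ^ (x - 1)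
          - 1 / x * (b : ℝ) ^ (z - 1) := by
      intro b hb
      have hb0 : (0 : ℝ) < b := by
        have := (Finset.mem_Ico.1 hb).1
        exact_mod_cast this
      have : z - 1 = (y - 1) + x := by linarith
      rw [this, Real.rpow_add hb0]
      ring
    rw [Finset.sum_congr rfl this, Finset.sum_sub_distrib, ← Finset.mul_sum]
    field_simp
    ring
  rw [e]
  have h1 : |∑ b ∈ Finset.Ico 1 c, (b : ℝ) ^ (y - 1) *
        (∑ a ∈ Finset.Ico 1 b, (a : ℝ) ^ (x - 1) - (b : ℝ) ^ x / x)| ≤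
        1 / (x * y) * (c : ℝ) ^ y := by
    calc _ ≤ ∑ b ∈ Finset.Ico 1 c, |(b : ℝ) ^ (y - 1) *
        (∑ a ∈ Finset.Ico 1 b, (a : ℝ) ^ (x - 1) - (b : ℝ) ^ x / x)| :=
          Finset.abs_sum_le_sum_abs _ _
      _ ≤ ∑ b ∈ Finset.Ico 1 c, (b : ℝ) ^ (y - 1) * (1 / x) := by
          refine Finset.sum_le_sum fun b hb => ?_
          rw [abs_mul, abs_of_nonneg (by positivity : (0 : ℝ) ≤ (b : ℝ) ^ (y - 1))]
          exact mul_le_mul_of_nonneg_left (aux_abs x hx hx1 b (Finset.mem_Ico.1 hb).1)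
            (by positivity)
      _ ≤ (c : ℝ) ^ y / y * (1 / x) := by
          rw [← Finset.sum_mul]
          exact mul_le_mul_of_nonneg_right (aux_Ico_up y hy hy1 c) (by positivity)
      _ = _ := by field_simp
  have h2 : |1 / x * (∑ b ∈ Finset.Ico 1 c, (b : ℝ) ^ (z - 1) - (c : ℝ) ^ z / z)| ≤
      1 / (x * z) * (c : ℝ) ^ y := by
    rw [abs_mul, abs_of_pos (by positivity : 0 < 1 / x)]
    calc _ ≤ 1 / x * (1 / z) :=
          mul_le_mul_of_nonneg_left (aux_abs z hz hz1 c hc) (by positivity)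
      _ = 1 / (x * z) * 1 := by field_simp
      _ ≤ _ := mul_le_mul_of_nonneg_left hc1 (by positivity)
  rw [add_mul]
  exact (abs_add_le _ _).trans (add_le_add h1 h2)

/-- The triple-sum estimate behind Proposition 4.2: for `β > 0` there is `C > 0` depending
only on `β` such that for all `n ≥ 1`,
`|Σ_{1≤a<b<c≤n} a^{−2/(2+β)} b^{−(1+β)/(2+β)} c^{−(1+β)/(2+β)} − ((2+β)²/(β(1+β)))·n|
  ≤ C·n^{2/(2+β)}`. -/
theorem triple_sum_linear_estimate (β : ℝ) (hβ : 0 < β) :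
    ∃ C : ℝ, 0 < C ∧ ∀ n : ℕ, 1 ≤ n →
      |(∑ a ∈ Finset.Icc 1 n, ∑ b ∈ Finset.Ioc a n, ∑ c ∈ Finset.Ioc b n,
          (a : ℝ) ^ (-(2 / (2 + β))) * (b : ℝ) ^ (-((1 + β) / (2 + β)))
            * (c : ℝ) ^ (-((1 + β) / (2 + β))))
        - ((2 + β) ^ 2 / (β * (1 + β))) * (n : ℝ)| ≤ C * (n : ℝ) ^ (2 / (2 + β)) := by

  have hs : 0 < 2 + β := by linarith
  obtain ⟨x, hx⟩ : ∃ x, x = β / (2 + β) := ⟨_, rfl⟩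
  obtain ⟨y, hy⟩ : ∃ y, y = 1 / (2 + β) := ⟨_, rfl⟩
  obtain ⟨z, hz⟩ : ∃ z, z = (1 + β) / (2 + β) := ⟨_, rfl⟩
  obtain ⟨w, hw⟩ : ∃ w, w = 2 / (2 + β) := ⟨_, rfl⟩
  have hx0 : 0 < x := by rw [hx]; positivity
  have hy0 : 0 < y := by rw [hy]; positivity
  have hz0 : 0 < z := by rw [hz]; positivity
  have hw0 : 0 < w := by rw [hw]; positivity
  have hxy : x + y = z := by rw [hx, hy, hz]; ring
  have hyz : y + z = 1 := by rw [hy, hz]; field_simp; ring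
  have hxw : x + w = 1 := by rw [hx, hw]; field_simp; ring
  have hk : (2 + β) ^ 2 / (β * (1 + β)) = 1 / (x * z) := by rw [hx, hz]; field_simp
  rw [hk, ← hz, ← hw]
  have e1 : -w = x - 1 := by linarith
  have e2 : -z = y - 1 := by linarith
  refine ⟨(1 / (x * y) + 1 / (x * z)) * (1 / w), by positivity, fun n hn => ?_⟩
  rw [aux_swap (fun a b c => (a : ℝ) ^ (-w) * (b : ℝ) ^ (-z) * (c : ℝ) ^ (-z)), e1, e2]
  have e : ∑ c ∈ Finset.Icc 1 n, ∑ b ∈ Finset.Ico 1 c, ∑ a ∈ Finset.Ico 1 b,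
      (a : ℝ) ^ (x - 1) * (b : ℝ) ^ (y - 1) * (c : ℝ) ^ (y - 1) - 1 / (x * z) * (n : ℝ) =
      ∑ c ∈ Finset.Icc 1 n, (c : ℝ) ^ (y - 1) *
      (∑ b ∈ Finset.Ico 1 c, (b : ℝ) ^ (y - 1) * ∑ a ∈ Finset.Ico 1 b, (a : ℝ) ^ (x - 1)
      - 1 / (x * z) * (c : ℝ) ^ z) := by
    have h1 : ∑ c ∈ Finset.Icc 1 n, 1 / (x * z) = 1 / (x * z) * (n : ℝ) := by
      rw [Finset.sum_const, Nat.card_Icc, nsmul_eq_mul, Nat.add_sub_cancel, mul_comm]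
    rw [← h1, ← Finset.sum_sub_distrib]
    refine Finset.sum_congr rfl fun c hc => ?_
    have hc0 : (0 : ℝ) < c := by
      have := (Finset.mem_Icc.1 hc).1
      exact_mod_cast this
    have h2 : (c : ℝ) ^ (y - 1) * (c : ℝ) ^ z = 1 := by
      rw [← Real.rpow_add hc0, show y - 1 + z = 0 by linarith, Real.rpow_zero]
    rw [mul_sub, mul_left_comm, h2, mul_one, Finset.mul_sum]
    congr 1
    refine Finset.sum_congr rfl fun b hb => ?_
    rw [Finset.mul_sum, Finset.mul_sum]
    refine Finset.sum_congr rfl fun a ha => ?_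
    ring
  rw [e]
  calc _ ≤ ∑ c ∈ Finset.Icc 1 n, |(c : ℝ) ^ (y - 1) *
      (∑ b ∈ Finset.Ico 1 c, (b : ℝ) ^ (y - 1) * ∑ a ∈ Finset.Ico 1 b, (a : ℝ) ^ (x - 1)
      - 1 / (x * z) * (c : ℝ) ^ z)| := Finset.abs_sum_le_sum_abs _ _
    _ ≤ ∑ c ∈ Finset.Icc 1 n, (1 / (x * y) + 1 / (x * z)) * (c : ℝ) ^ (w - 1) := by
      refine Finset.sum_le_sum fun c hc => ?_
      have hc1 := (Finset.mem_Icc.1 hc).1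
      have hc0 : (0 : ℝ) < c := by exact_mod_cast hc1
      rw [abs_mul, abs_of_nonneg (by positivity : (0 : ℝ) ≤ (c : ℝ) ^ (y - 1))]
      refine (mul_le_mul_of_nonneg_left (aux_B x y z hx0 (by linarith) hy0 (by linarith)
        hz0 (by linarith) hxy c hc1) (by positivity)).trans (le_of_eq ?_)
      rw [show w - 1 = (y - 1) + y by linarith, Real.rpow_add hc0]
      ring
    _ ≤ (1 / (x * y) + 1 / (x * z)) * ((n : ℝ) ^ w / w) := by
      rw [← Finset.mul_sum]
      exact mul_le_mul_of_nonneg_left (aux_Icc w hw0 (by linarith) n) (by positivity)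
    _ = _ := by ring
end
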